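/- Let n ≥ 1 and let f : C^{gp}_n(M;ℤ)_G → A be a group n-cocycle, i.e. a homomorphism with f ∘ ∂^{gp}_{n+1} = 0. Then Φ_f := f ∘ ψ_n ∘ γ_n : C^{BR}_n(X;ℤ) → A is a birack n-cocycle of the G-Alexander biquandle X, i.e. Φ_f ∘ ∂^{BR}_{n+1} = 0. -/

import Mathlib

open FreeAbelianGroup
open scoped TensorProduct

namespace GAlex

variable {G M A : Type*} [Group G] [AddCommGroup M] [DistribMulAction Gᵐᵒᵖ M] [AddCommGroup A]

/-- The right action `m · g` of a group element `g : G` on `m : M`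
(coming from the right `ℤ[G]`-module structure on `M`). -/
def ract (m : M) (g : G) : M := MulOpposite.op g • m

variable (φ : G →* G)

/-- The operation `(m,g) ⊳ (n,h) = (mh + n(φ(h) − h), h⁻¹gh)` of the `G`-Alexander biquandle. -/
def under (x y : M × G) : M × G :=
  (ract x.1 y.2 + ract y.1 (φ y.2) - ract y.1 y.2, y.2⁻¹ * x.2 * y.2)

/-- The operation `(m,g) ⊚ (n,h) = (mφ(h), g)` of the `G`-Alexander biquandle. -/
def overOp (x y : M × G) : M × G := (ract x.1 (φ y.2), x.2)

/-- The face `g_{⟨p⟩}` (delete the `p`-th entry). -/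
def dGdel (n : ℕ) (p : Fin (n + 1)) (g : Fin (n + 1) → G) : Fin n → G :=
  fun j => g (p.succAbove j)

/-- The face `g_{⟨⊲p⟩}` (conjugate the first entries by `g p` and delete the `p`-th entry). -/
def dGconj (n : ℕ) (p : Fin (n + 1)) (g : Fin (n + 1) → G) : Fin n → G :=
  fun j => if (j : ℕ) < (p : ℕ) then (g p)⁻¹ * g j.castSucc * g p else g j.succ

/-- The face `m_{⟨p⟩}` (merge the two entries adjacent to position `p`;
for `p = 0` drop the first entry). -/
def dMmer (n : ℕ) (p : Fin (n + 1)) (m : Fin (n + 1) → M) : Fin n → M :=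
  fun j =>
    if (j : ℕ) + 1 < (p : ℕ) then m j.castSucc
    else if (j : ℕ) + 1 = (p : ℕ) then m j.castSucc + m j.succ
    else m j.succ

/-- The face `m_{⟨⊲p⟩}`. -/
def dMconj (n : ℕ) (p : Fin (n + 1)) (g : Fin (n + 1) → G) (m : Fin (n + 1) → M) : Fin n → M :=
  fun j =>
    if (j : ℕ) + 1 < (p : ℕ) then ract (m j.castSucc) (g p)
    else if (j : ℕ) + 1 = (p : ℕ) then ract (m j.castSucc) (g p) + ract (m j.succ) (φ (g p))
    else ract (m j.succ) (φ (g p))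

/-- The boundary map `∂^{BR_U}_{n+1} : C^{BR_U}_{n+1}(X;ℤ) → C^{BR_U}_n(X;ℤ)`
(the boundary `∂^{BR_U}_k` is `0` for `k ≤ 1`, which agrees with this formula at `n = 0`). -/
def dBRU (n : ℕ) :
    FreeAbelianGroup ((Fin (n + 1) → G) × (Fin (n + 1) → M)) →+
      FreeAbelianGroup ((Fin n → G) × (Fin n → M)) :=
  FreeAbelianGroup.lift fun x =>
    ∑ p : Fin (n + 1),
      (-1 : ℤ) ^ (p : ℕ) •
        (FreeAbelianGroup.of (dGdel n p x.1, dMmer n p x.2) -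
          FreeAbelianGroup.of (dGconj n p x.1, dMconj φ n p x.1 x.2))

/-- The birack boundary map `∂^{BR}_{n+1} : C^{BR}_{n+1}(X;ℤ) → C^{BR}_n(X;ℤ)`
for the `G`-Alexander biquandle `X = M × G` (with trivial `X`-set). -/
def dBR (n : ℕ) :
    FreeAbelianGroup (Fin (n + 1) → M × G) →+ FreeAbelianGroup (Fin n → M × G) :=
  FreeAbelianGroup.lift fun x =>
    ∑ p : Fin (n + 1),
      (-1 : ℤ) ^ (p : ℕ) •
        (FreeAbelianGroup.of (fun j => x (p.succAbove j)) -
          FreeAbelianGroup.of (fun j : Fin n =>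
            if (j : ℕ) < (p : ℕ) then under φ (x j.castSucc) (x p)
            else overOp φ (x j.succ) (x p)))

/-- `γ_n((m₁,g₁),…,(m_n,g_n)) = (g₁,…,g_n; m₁−m₂, …, m_{n−1}−m_n, m_n)`. -/
def gammaMap (n : ℕ) :
    FreeAbelianGroup (Fin n → M × G) →+ FreeAbelianGroup ((Fin n → G) × (Fin n → M)) :=
  FreeAbelianGroup.lift fun x =>
    FreeAbelianGroup.of
      (fun j => (x j).2,
       fun j => (x j).1 - if h : (j : ℕ) + 1 < n then (x ⟨(j : ℕ) + 1, h⟩).1 else 0)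

/-- `r_n(g₁,…,g_n; m₁,…,m_n) = ((m₁+⋯+m_n, g₁), (m₂+⋯+m_n, g₂), …, (m_n, g_n))`. -/
def rMap (n : ℕ) :
    FreeAbelianGroup ((Fin n → G) × (Fin n → M)) →+ FreeAbelianGroup (Fin n → M × G) :=
  FreeAbelianGroup.lift fun p =>
    FreeAbelianGroup.of fun j => ((∑ i ∈ Finset.Ici j, p.2 i), p.1 j)

/-- The boundary map `∂^{BR_U}_{d+1}` of `C^{BR_U}_*(X;ℤ)_X` (the version with `X`-set `X`,
whose degree-`d` chain group is free on `(1+d)`-tuples); it is `0` in degrees `≤ 1`. -/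
def dBRUX : (d : ℕ) →
    FreeAbelianGroup ((Fin (d + 2) → G) × (Fin (d + 2) → M)) →+
      FreeAbelianGroup ((Fin (d + 1) → G) × (Fin (d + 1) → M))
  | 0 => 0
  | d + 1 =>
    FreeAbelianGroup.lift fun x =>
      ∑ i : Fin (d + 2),
        (-1 : ℤ) ^ (i : ℕ) •
          (FreeAbelianGroup.of (dGdel (d + 2) i.succ x.1, dMmer (d + 2) i.succ x.2) -
            FreeAbelianGroup.of (dGconj (d + 2) i.succ x.1, dMconj φ (d + 2) i.succ x.1 x.2))

/-- The boundary map `∂^{BR}_{d+1}` of `C^{BR}_*(X;ℤ)_X` (the version with `X`-set `X`);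
it is `0` in degrees `≤ 1`. -/
def dBRX : (d : ℕ) →
    FreeAbelianGroup (Fin (d + 2) → M × G) →+ FreeAbelianGroup (Fin (d + 1) → M × G)
  | 0 => 0
  | d + 1 =>
    FreeAbelianGroup.lift fun x =>
      ∑ i : Fin (d + 2),
        (-1 : ℤ) ^ (i : ℕ) •
          (FreeAbelianGroup.of (fun j => x (i.succ.succAbove j)) -
            FreeAbelianGroup.of (fun j : Fin (d + 2) =>
              if (j : ℕ) < (i : ℕ) + 1 then under φ (x j.castSucc) (x i.succ)
              else overOp φ (x j.succ) (x i.succ)))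


/-- The subgroup of `G`-coinvariants relations in `C^{gp}_n(M;ℤ)`:
generated by all `(m₁g,…,m_ng) − (m₁,…,m_n)`. -/
def coinvSub (n : ℕ) : AddSubgroup (FreeAbelianGroup (Fin n → M)) :=
  AddSubgroup.closure
    {z | ∃ (m : Fin n → M) (g : G),
        z = FreeAbelianGroup.of (fun i => ract (m i) g) - FreeAbelianGroup.of m}

/-- The coinvariant group chain group `C^{gp}_n(M;ℤ)_G`. -/
abbrev CgpG (n : ℕ) : Type _ :=
  FreeAbelianGroup (Fin n → M) ⧸ coinvSub (G := G) (M := M) n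

/-- The group-homology boundary map `∂^{gp}_{n+1} : C^{gp}_{n+1}(M;ℤ) → C^{gp}_n(M;ℤ)`
(it is `0` in degrees `≤ 1`, which agrees with this formula at `n = 0`). -/
def dgp (n : ℕ) :
    FreeAbelianGroup (Fin (n + 1) → M) →+ FreeAbelianGroup (Fin n → M) :=
  FreeAbelianGroup.lift fun m =>
    (∑ p : Fin (n + 1), (-1 : ℤ) ^ (p : ℕ) • FreeAbelianGroup.of (dMmer n p m)) +
      (-1 : ℤ) ^ (n + 1) • FreeAbelianGroup.of fun j : Fin n => m j.castSucc

/-- `|k| = k₁ + ⋯ + k_n`. -/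
def wt {n : ℕ} (k : Fin n → Bool) : ℕ := ∑ i, if k i then 1 else 0

/-- `g_{k,i} = φ(g₀^{k₀} ⋯ g_i^{k_i}) · g_{i+1}^{k_{i+1}} ⋯ g_{n-1}^{k_{n-1}}`
(indices written `0`-based; the products are ordered). -/
def gki {n : ℕ} (g : Fin n → G) (k : Fin n → Bool) (i : Fin n) : G :=
  φ ((((List.finRange n).filter fun j => decide (j ≤ i)).map
        fun j => if k j then g j else 1).prod) *
    (((List.finRange n).filter fun j => decide (i < j)).map
        fun j => if k j then g j else 1).prod

/-- The value of `ψ` on a generator: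
`Σ_{k, k₀ = 0} (−1)^{|k|} (m₀ g_{k,0}, …, m_n g_{k,n})`, as an element of the free
abelian group (before passing to coinvariants). -/
def psiVal (n : ℕ) (x : (Fin (n + 1) → G) × (Fin (n + 1) → M)) :
    FreeAbelianGroup (Fin (n + 1) → M) :=
  ∑ k ∈ Finset.univ.filter fun k : Fin (n + 1) → Bool => k 0 = false,
    (-1 : ℤ) ^ wt k • FreeAbelianGroup.of fun i => ract (x.2 i) (gki φ x.1 k i)

/-- `ψ` as a homomorphism into the free abelian group (before coinvariants). -/
def psiFree (n : ℕ) :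
    FreeAbelianGroup ((Fin (n + 1) → G) × (Fin (n + 1) → M)) →+
      FreeAbelianGroup (Fin (n + 1) → M) :=
  FreeAbelianGroup.lift (psiVal φ n)

/-- The homomorphism `ψ : C^{BR_U} → C^{gp}(M;ℤ)_G`. -/
def psiG (n : ℕ) :
    FreeAbelianGroup ((Fin (n + 1) → G) × (Fin (n + 1) → M)) →+
      CgpG (G := G) (M := M) (n + 1) :=
  (QuotientAddGroup.mk' (coinvSub (G := G) (M := M) (n + 1))).comp (psiFree φ n)

/-- The homomorphism `ψ_{•,λ}`, sending a generator `x` to `ψ(x) ⊗ λ(x₁)` where `x₁` is the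
first `G`-entry of `x`. -/
noncomputable def psiLam (lam : G → A) (n : ℕ) :
    FreeAbelianGroup ((Fin (n + 1) → G) × (Fin (n + 1) → M)) →+
      TensorProduct ℤ (CgpG (G := G) (M := M) (n + 1)) A :=
  FreeAbelianGroup.lift fun x =>
    (QuotientAddGroup.mk' (coinvSub (G := G) (M := M) (n + 1)) (psiVal φ n x)) ⊗ₜ[ℤ]
      lam (x.1 0)

/-- `D^{gp}_n(M;ℤ)_G`: the image in the coinvariants of the subgroup generated by tuples
with a vanishing entry in a position `1 ≤ i ≤ n−1`. -/
def DgpGsub (n : ℕ) : AddSubgroup (CgpG (G := G) (M := M) n) :=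
  (AddSubgroup.closure
      {z : FreeAbelianGroup (Fin n → M) |
        ∃ (m : Fin n → M) (i : Fin n),
          (i : ℕ) + 1 < n ∧ m i = 0 ∧ z = FreeAbelianGroup.of m}).map
    (QuotientAddGroup.mk' (coinvSub (G := G) (M := M) n))

/-!
Both `γ` and `ψ` are chain maps, the latter with values in the coinvariants, so `Φ_f ∘ ∂` factors
through `f ∘ ∂ = 0`.

A summand of `ψ(g; u)` only depends on `u` and the tuple `h = (g₀^{k₀}, g₁^{k₁}, …)`: it acts on
`u i` by the ordered product of the `h j`, with `φ` applied to the factors with `j ≤ i`.  Moving the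
`p`-th factor of this product to the front conjugates the factors it passes, so the `p`-th merging
face of the summand for `(h, u)` is the summand for the `p`-th conjugation face of `(h, u)`.  If
`k p = 1` this face comes from the conjugation face of `(g, u)`, and if `k p = 0`, so that
`h p = 1`, from the deletion face.  Summing over `k p` therefore yields the two faces in the
boundary of `(g, u)` with their signs.  The two extreme faces of the group boundary vanish in the
coinvariants, since their summands for the two values of an exponent at the end of the tuple differ
only by the action of an element of `G`.
-/

section RightAction

lemma ract_one (m : M) : ract m (1 : G) = m := by simp [ract]

lemma ract_mul (m : M) (a b : G) : ract m (a * b) = ract (ract m a) b := by simp [ract, mul_smul]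

lemma zero_ract (a : G) : ract (0 : M) a = 0 := smul_zero _

lemma add_ract (m m' : M) (a : G) : ract (m + m') a = ract m a + ract m' a := smul_add _ _ _

lemma sub_ract (m m' : M) (a : G) : ract (m - m') a = ract m a - ract m' a := smul_sub _ _ _

end RightAction

section Gamma

/-- The `M`-part `(m₀ - m₁, …, m_{n-2} - m_{n-1}, m_{n-1})` of the map `γ`. -/
def succDiff {n : ℕ} (m : Fin n → M) : Fin n → M :=
  fun j => m j - if h : (j : ℕ) + 1 < n then m ⟨(j : ℕ) + 1, h⟩ else 0

lemma gammaMap_of {G M : Type*} [AddCommGroup M] {n : ℕ} (x : Fin n → M × G) :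
    gammaMap n (of x) = of (fun j => (x j).2, succDiff fun j => (x j).1) :=
  lift_apply_of _ _

lemma succDiff_succAbove {n : ℕ} (m : Fin (n + 1) → M) (p : Fin (n + 1)) :
    succDiff (fun j => m (p.succAbove j)) = dMmer n p (succDiff m) := by
  obtain ⟨p, hp⟩ := p
  funext ⟨j, hj⟩
  simp only [succDiff, dMmer, Fin.succAbove, Fin.lt_def, Fin.castSucc_mk, Fin.succ_mk]
  split_ifs <;> first | omega | simp only [sub_add_sub_cancel]

lemma succDiff_under_overOp {n : ℕ} (x : Fin (n + 1) → M × G) (p : Fin (n + 1)) :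
    succDiff (fun j : Fin n => (if (j : ℕ) < (p : ℕ) then under φ (x j.castSucc) (x p)
        else overOp φ (x j.succ) (x p)).1) =
      dMconj φ n p (fun j => (x j).2) (succDiff fun j => (x j).1) := by
  obtain ⟨p, hp⟩ := p
  funext ⟨j, hj⟩
  simp only [succDiff, dMconj, Fin.castSucc_mk, Fin.succ_mk]
  rcases lt_trichotomy (j + 1) p with hjp | rfl | hpj
  · split_ifs <;> first | omega | (simp only [under, sub_ract]; abel)
  · split_ifs <;> first | omega | (simp only [under, overOp, sub_ract, zero_ract]; abel)
  · split_ifs <;> first | omega | simp only [overOp, sub_ract, zero_ract]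

theorem gammaMap_comp_dBR (n : ℕ) :
    (gammaMap n).comp (dBR (M := M) φ n) = (dBRU φ n).comp (gammaMap (n + 1)) := by
  ext x
  have snd_face (p : Fin (n + 1)) : (fun j : Fin n => (if (j : ℕ) < (p : ℕ) then
      under φ (x j.castSucc) (x p) else overOp φ (x j.succ) (x p)).2) =
        dGconj n p fun j => (x j).2 := by
    funext j
    simp only [dGconj, under, overOp, apply_ite Prod.snd]
  simp only [AddMonoidHom.comp_apply, dBR, dBRU, lift_apply_of, map_sum, map_zsmul, map_sub,
    gammaMap_of, succDiff_under_overOp, snd_face, succDiff_succAbove (fun j => (x j).1)]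
  rfl

end Gamma

section CubeSum

variable {B : Type*} [AddCommGroup B]

/-- The alternating sum `∑ (-1)^|k| E k` over the vertices `k` of the `n`-cube. -/
def cubeSum {n : ℕ} (E : (Fin n → Bool) → A) : A := ∑ k, (-1 : ℤ) ^ wt k • E k

lemma map_cubeSum {n : ℕ} (f : A →+ B) (E : (Fin n → Bool) → A) :
    f (cubeSum E) = cubeSum fun k => f (E k) := by
  simp only [cubeSum, map_sum, map_zsmul]

lemma wt_insertNth {n : ℕ} (p : Fin (n + 1)) (b : Bool) (k : Fin n → Bool) :
    wt (p.insertNth (α := fun _ => Bool) b k) = (if b then 1 else 0) + wt k := by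
  simp only [wt, Fin.sum_univ_succAbove _ p, Fin.insertNth_apply_same,
    Fin.insertNth_apply_succAbove]

lemma cubeSum_eq_sub {n : ℕ} (p : Fin (n + 1)) (E : (Fin (n + 1) → Bool) → A) :
    cubeSum E = (cubeSum fun k => E (p.insertNth (α := fun _ => Bool) false k)) -
      cubeSum fun k => E (p.insertNth (α := fun _ => Bool) true k) := by
  unfold cubeSum
  rw [← (Fin.insertNthEquiv (fun _ => Bool) p).sum_comp, Fintype.sum_prod_type]
  simp [Fin.insertNthEquiv, wt_insertNth, pow_add, sub_eq_add_neg, add_comm]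

lemma cubeSum_eq_zero {n : ℕ} (p : Fin (n + 1)) {E : (Fin (n + 1) → Bool) → A}
    (hE : ∀ k, E (p.insertNth (α := fun _ => Bool) true k) =
      E (p.insertNth (α := fun _ => Bool) false k)) : cubeSum E = 0 := by
  simp only [cubeSum_eq_sub p, hE, sub_self]

lemma sum_filter_apply_zero_eq_cubeSum {n : ℕ} (E : (Fin (n + 1) → Bool) → A) :
    ∑ k ∈ Finset.univ.filter (fun k : Fin (n + 1) → Bool => k 0 = false), (-1 : ℤ) ^ wt k • E k =
      cubeSum fun k : Fin n → Bool => E (Fin.cons false k) := by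
  have := cubeSum_eq_sub 0 fun k => if k 0 = false then E k else 0
  simpa [cubeSum, Finset.sum_filter] using this

end CubeSum

section TwistedProd

/-- The ordered product of the `h j`, with `φ` applied to the factors with `j ≤ i`.  For
`h j = g j ^ k j` this is the group element `g_{k,i}` in the definition of `ψ`. -/
def twistedProd {n : ℕ} (h : Fin n → G) (i : Fin n) : G :=
  (List.ofFn fun j => if j ≤ i then φ (h j) else h j).prod

lemma dGconj_apply {n : ℕ} (p : Fin (n + 1)) (h : Fin (n + 1) → G) (j : Fin n) :
    dGconj n p h j = if (j : ℕ) < (p : ℕ) then (h p)⁻¹ * h (p.succAbove j) * h p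
      else h (p.succAbove j) := by
  unfold dGconj
  split_ifs with hjp
  · rw [Fin.succAbove_of_castSucc_lt p j hjp]
  · rw [Fin.succAbove_of_le_castSucc p j (not_lt.1 hjp)]

lemma prod_ofFn_eq_mul_dGconj {n : ℕ} (p : Fin (n + 1)) (h : Fin (n + 1) → G) :
    (List.ofFn h).prod = h p * (List.ofFn (dGconj n p h)).prod := by
  induction n with
  | zero =>
    rw [Fin.fin_one_eq_zero p]
    simp
  | succ n ih =>
    induction p using Fin.cases with
    | zero => simp [List.ofFn_succ, dGconj]
    | succ p =>
      have tail_face : (fun j : Fin n => dGconj (n + 1) p.succ h j.succ) =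
          dGconj n p fun j => h j.succ := by
        funext j
        simp [dGconj]
      have head_face : dGconj (n + 1) p.succ h 0 = (h p.succ)⁻¹ * h 0 * h p.succ := by
        simp [dGconj]
      rw [List.ofFn_succ, List.prod_cons, ih p, List.ofFn_succ (f := dGconj _ _ _),
        List.prod_cons, tail_face, head_face]
      group

lemma twistedProd_castSucc_eq_mul_last {n : ℕ} (h : Fin (n + 1) → G) (i : Fin n) :
    twistedProd φ h i.castSucc = twistedProd φ (fun j => h j.castSucc) i * h (Fin.last n) := by
  rw [twistedProd, List.ofFn_succ', List.concat_eq_append, List.prod_append,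
    List.prod_singleton, if_neg (Fin.castSucc_lt_last i).not_ge]
  rfl

lemma twistedProd_cons {n : ℕ} (c : G) (h : Fin n → G) (i : Fin (n + 1)) :
    twistedProd φ (Fin.cons c h) i = φ c * twistedProd φ (Fin.cons 1 h) i := by
  simp [twistedProd, List.ofFn_succ]

variable {φ} (hφ : ∀ g : G, φ g ∈ Subgroup.center G)
include hφ

lemma inv_mul_map_mul (a c : G) : c⁻¹ * φ a * c = φ a := by
  rw [Subgroup.mem_center_iff.1 (hφ a), inv_mul_cancel_right]

lemma map_inv_mul_mul_map (a c : G) : (φ c)⁻¹ * a * φ c = a := by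
  rw [mul_assoc, Subgroup.mem_center_iff.1 (hφ c), inv_mul_cancel_left]

lemma map_conj (a c : G) : φ (c⁻¹ * a * c) = φ a := by
  rw [map_mul, map_mul, map_inv, map_inv_mul_mul_map hφ]

lemma twistedProd_castSucc {n : ℕ} {p : Fin (n + 1)} (h : Fin (n + 1) → G) {i : Fin n}
    (hip : i.castSucc < p) :
    twistedProd φ h i.castSucc = h p * twistedProd φ (dGconj n p h) i := by
  rw [twistedProd, prod_ofFn_eq_mul_dGconj p, if_neg hip.not_ge, twistedProd]
  congr 3
  funext j
  simp only [Fin.lt_def, Fin.val_castSucc] at hip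
  simp only [dGconj, Fin.le_def, Fin.val_castSucc, Fin.val_succ, if_neg hip.not_ge]
  split_ifs <;> first | omega | simp only [inv_mul_map_mul hφ, map_conj hφ]

lemma twistedProd_succ {n : ℕ} {p : Fin (n + 1)} (h : Fin (n + 1) → G) {i : Fin n}
    (hpi : p ≤ i.succ) :
    twistedProd φ h i.succ = φ (h p) * twistedProd φ (dGconj n p h) i := by
  rw [twistedProd, prod_ofFn_eq_mul_dGconj p, if_pos hpi, twistedProd]
  congr 3
  funext j
  simp only [Fin.le_def, Fin.val_succ] at hpi
  simp only [dGconj, Fin.le_def, Fin.val_castSucc, Fin.val_succ, if_pos hpi]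
  split_ifs <;> first | omega | simp only [map_inv_mul_mul_map hφ, map_conj hφ]

end TwistedProd

section TwistTuple

/-- The tuple `(g₀^{k₀}, …, g_{n-1}^{k_{n-1}})` for exponents `kⱼ ∈ {0, 1}`. -/
def boolPow {n : ℕ} (g : Fin n → G) (k : Fin n → Bool) : Fin n → G :=
  fun j => if k j then g j else 1

/-- The summand of `ψ` for the tuple of powers `h = (g₀^{k₀}, …)`; here `h` is arbitrary so that the
faces of `h` can be taken as well. -/
def twistTuple {n : ℕ} (h : Fin n → G) (u : Fin n → M) : Fin n → M :=
  fun i => ract (u i) (twistedProd φ h i)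

lemma gki_eq_twistedProd {n : ℕ} (g : Fin n → G) (k : Fin n → Bool) (i : Fin n) :
    gki φ g k i = twistedProd φ (boolPow g k) i := by
  induction n with
  | zero => exact i.elim0
  | succ n ih =>
    induction i using Fin.cases with
    | zero =>
      simp [gki, twistedProd, boolPow, List.finRange_succ, List.ofFn_succ, List.filter_map,
        Function.comp_def, List.ofFn_eq_map]
    | succ i =>
      have tail_eq := ih (fun j => g j.succ) (fun j => k j.succ) i
      simp only [gki, twistedProd, boolPow] at tail_eq
      simp only [gki, twistedProd, boolPow, List.finRange_succ, List.ofFn_succ, List.filter_cons,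
        List.filter_map, List.map_map, List.map_cons, List.prod_cons, map_mul, mul_assoc,
        Function.comp_def, Fin.zero_le, Fin.not_lt_zero, Fin.succ_le_succ_iff,
        Fin.succ_lt_succ_iff, decide_true, decide_false, Bool.false_eq_true, if_true, if_false,
        ← tail_eq]

lemma dGconj_boolPow_insertNth_true {n : ℕ} (p : Fin (n + 1)) (g : Fin (n + 1) → G)
    (k : Fin n → Bool) :
    dGconj n p (boolPow g (p.insertNth (α := fun _ => Bool) true k)) =
      boolPow (dGconj n p g) k := by
  funext j
  simp only [dGconj_apply, boolPow, Fin.insertNth_apply_same, Fin.insertNth_apply_succAbove,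
    if_true]
  split_ifs <;> simp

lemma dGconj_boolPow_insertNth_false {n : ℕ} (p : Fin (n + 1)) (g : Fin (n + 1) → G)
    (k : Fin n → Bool) :
    dGconj n p (boolPow g (p.insertNth (α := fun _ => Bool) false k)) =
      boolPow (dGdel n p g) k := by
  funext j
  simp only [dGconj_apply, dGdel, boolPow, Fin.insertNth_apply_same,
    Fin.insertNth_apply_succAbove, Bool.false_eq_true, if_false, inv_one, one_mul, mul_one,
    ite_self]

lemma twistTuple_init {n : ℕ} (h : Fin (n + 1) → G) (u : Fin (n + 1) → M) :
    (fun i : Fin n => twistTuple φ h u i.castSucc) =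
      fun i => ract (twistTuple φ (fun j => h j.castSucc) (fun j => u j.castSucc) i)
        (h (Fin.last n)) := by
  funext i
  rw [twistTuple, twistedProd_castSucc_eq_mul_last, ract_mul, twistTuple]

variable {φ} (hφ : ∀ g : G, φ g ∈ Subgroup.center G)
include hφ

lemma dMmer_twistTuple {n : ℕ} (p : Fin (n + 1)) (h : Fin (n + 1) → G) (u : Fin (n + 1) → M) :
    dMmer n p (twistTuple φ h u) = twistTuple φ (dGconj n p h) (dMconj φ n p h u) := by
  funext j
  simp only [dMmer, dMconj, twistTuple]
  split_ifs with hlt heq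
  · have hjp : j.castSucc < p := Fin.lt_def.2 (by rw [Fin.val_castSucc]; omega)
    rw [twistedProd_castSucc hφ h hjp, ract_mul]
  · have hjp : j.castSucc < p := Fin.lt_def.2 (by rw [Fin.val_castSucc]; omega)
    have hpj : p ≤ j.succ := Fin.le_def.2 (by rw [Fin.val_succ]; omega)
    rw [twistedProd_castSucc hφ h hjp, twistedProd_succ hφ h hpj, add_ract, ract_mul, ract_mul]
  · have hpj : p ≤ j.succ := Fin.le_def.2 (by rw [Fin.val_succ]; omega)
    rw [twistedProd_succ hφ h hpj, ract_mul]

lemma dMmer_twistTuple_insertNth_true {n : ℕ} (p : Fin (n + 1)) (g : Fin (n + 1) → G)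
    (k : Fin n → Bool) (u : Fin (n + 1) → M) :
    dMmer n p (twistTuple φ (boolPow g (p.insertNth (α := fun _ => Bool) true k)) u) =
      twistTuple φ (boolPow (dGconj n p g) k) (dMconj φ n p g u) := by
  rw [dMmer_twistTuple hφ, dGconj_boolPow_insertNth_true]
  unfold dMconj
  simp only [boolPow, Fin.insertNth_apply_same, if_true]

lemma dMmer_twistTuple_insertNth_false {n : ℕ} (p : Fin (n + 1)) (g : Fin (n + 1) → G)
    (k : Fin n → Bool) (u : Fin (n + 1) → M) :
    dMmer n p (twistTuple φ (boolPow g (p.insertNth (α := fun _ => Bool) false k)) u) =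
      twistTuple φ (boolPow (dGdel n p g) k) (dMmer n p u) := by
  rw [dMmer_twistTuple hφ, dGconj_boolPow_insertNth_false]
  unfold dMconj dMmer
  simp only [boolPow, Fin.insertNth_apply_same, Bool.false_eq_true, if_false,
    map_one, ract_one]

lemma twistTuple_cons {n : ℕ} (c : G) (h : Fin n → G) (u : Fin (n + 1) → M) :
    twistTuple φ (Fin.cons c h) u = fun i => ract (twistTuple φ (Fin.cons 1 h) u i) (φ c) := by
  funext i
  rw [twistTuple, twistedProd_cons, ← Subgroup.mem_center_iff.1 (hφ c), ract_mul, twistTuple]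

end TwistTuple

section Psi

variable (G) in
/-- The projection of `C^{gp}_n(M;ℤ)` onto its `G`-coinvariants. -/
abbrev coinvProj (n : ℕ) : FreeAbelianGroup (Fin n → M) →+ CgpG (G := G) (M := M) n :=
  QuotientAddGroup.mk' (coinvSub (G := G) (M := M) n)

lemma coinvProj_of_ract {n : ℕ} (m : Fin n → M) (g : G) :
    coinvProj G n (of fun i => ract (m i) g) = coinvProj G n (of m) := by
  rw [← sub_eq_zero, ← map_sub, QuotientAddGroup.mk'_apply, QuotientAddGroup.eq_zero_iff]
  exact AddSubgroup.subset_closure ⟨m, g, rfl⟩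

lemma dgp_eq_sum_map (n : ℕ) :
    dgp (M := M) n = (∑ p : Fin (n + 1), (-1 : ℤ) ^ (p : ℕ) • FreeAbelianGroup.map (dMmer n p)) +
      (-1 : ℤ) ^ (n + 1) • FreeAbelianGroup.map fun m j => m j.castSucc := by
  ext m
  simp [dgp]

lemma psiVal_eq_cubeSum (n : ℕ) (g : Fin (n + 1) → G) (u : Fin (n + 1) → M) :
    psiVal φ n (g, u) =
      cubeSum fun k : Fin n → Bool => of (twistTuple φ (boolPow g (Fin.cons false k)) u) := by
  simp only [psiVal, gki_eq_twistedProd]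
  exact sum_filter_apply_zero_eq_cubeSum fun k => of (twistTuple φ (boolPow g k) u)

lemma coinvProj_map_init_psiVal {n : ℕ} (g : Fin (n + 2) → G) (u : Fin (n + 2) → M) :
    coinvProj G (n + 1) (FreeAbelianGroup.map (fun m j => m j.castSucc)
      (psiVal φ (n + 1) (g, u))) = 0 := by
  simp only [psiVal_eq_cubeSum, map_cubeSum, FreeAbelianGroup.map_of_apply, twistTuple_init,
    coinvProj_of_ract]
  refine cubeSum_eq_zero (Fin.last n) fun k => ?_
  simp only [Fin.insertNth_last', Fin.cons_snoc_eq_snoc_cons, boolPow, Fin.snoc_castSucc]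

variable {φ} (hφ : ∀ g : G, φ g ∈ Subgroup.center G)
include hφ

lemma map_dMmer_succ_psiVal {n : ℕ} (p : Fin (n + 1)) (g : Fin (n + 2) → G) (u : Fin (n + 2) → M) :
    FreeAbelianGroup.map (dMmer (n + 1) p.succ) (psiVal φ (n + 1) (g, u)) =
      psiVal φ n (dGdel (n + 1) p.succ g, dMmer (n + 1) p.succ u) -
        psiVal φ n (dGconj (n + 1) p.succ g, dMconj φ (n + 1) p.succ g u) := by
  simp only [psiVal_eq_cubeSum, map_cubeSum, FreeAbelianGroup.map_of_apply]
  simp only [cubeSum_eq_sub p, ← Fin.insertNth_succ_cons, dMmer_twistTuple_insertNth_false hφ,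
    dMmer_twistTuple_insertNth_true hφ]

-- `ψ` is restricted to the exponents with `k 0 = false` because the full sum vanishes.
lemma cubeSum_coinvProj_twistTuple {n : ℕ} (g : Fin (n + 1) → G) (u : Fin (n + 1) → M) :
    (cubeSum fun k => coinvProj G (n + 1) (of (twistTuple φ (boolPow g k) u))) = 0 := by
  refine cubeSum_eq_zero 0 fun k => ?_
  have boolPow_cons (b : Bool) : boolPow g (Fin.cons b k) =
      Fin.cons (if b then g 0 else 1) (boolPow (fun j => g j.succ) k) := by
    funext j
    induction j using Fin.cases <;> simp [boolPow]
  simp only [Fin.insertNth_zero', boolPow_cons, Bool.false_eq_true, if_true, if_false]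
  rw [twistTuple_cons hφ, coinvProj_of_ract]

lemma coinvProj_map_dMmer_zero_psiVal {n : ℕ} (g : Fin (n + 2) → G) (u : Fin (n + 2) → M) :
    coinvProj G (n + 1)
      (FreeAbelianGroup.map (dMmer (n + 1) 0) (psiVal φ (n + 1) (g, u))) = 0 := by
  simp only [psiVal_eq_cubeSum, map_cubeSum, FreeAbelianGroup.map_of_apply, ← Fin.insertNth_zero',
    dMmer_twistTuple_insertNth_false hφ, cubeSum_coinvProj_twistTuple hφ]

lemma coinvProj_psiVal_face_zero {n : ℕ} (g : Fin (n + 2) → G) (u : Fin (n + 2) → M) :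
    coinvProj G (n + 1) (psiVal φ n (dGconj (n + 1) 0 g, dMconj φ (n + 1) 0 g u)) =
      coinvProj G (n + 1) (psiVal φ n (dGdel (n + 1) 0 g, dMmer (n + 1) 0 u)) := by
  have ract_face (h : Fin (n + 1) → G) : twistTuple φ h (dMconj φ (n + 1) 0 g u) =
      fun i => ract (twistTuple φ h (dMmer (n + 1) 0 u) i) (φ (g 0)) := by
    funext i
    simp only [twistTuple, ← ract_mul, Subgroup.mem_center_iff.1 (hφ (g 0))]
    simp [dMmer, dMconj, ract_mul]
  have dGconj_zero : dGconj (n + 1) 0 g = dGdel (n + 1) 0 g := by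
    funext j
    simp [dGconj, dGdel]
  simp only [psiVal_eq_cubeSum, map_cubeSum, ract_face, coinvProj_of_ract, dGconj_zero]

theorem psiG_comp_dBRU (n : ℕ) :
    (psiG (M := M) φ n).comp (dBRU φ (n + 1)) =
      ((coinvProj G (n + 1)).comp (dgp (n + 1))).comp (psiFree φ (n + 1)) := by
  ext ⟨g, u⟩
  simp only [AddMonoidHom.comp_apply, psiG, psiFree, dBRU, dgp_eq_sum_map, lift_apply_of, map_sum,
    map_sub, map_zsmul, map_add, AddMonoidHom.add_apply, AddMonoidHom.finsetSum_apply,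
    AddMonoidHom.smul_apply]
  rw [Fin.sum_univ_succ (n := n + 1), Fin.sum_univ_succ (n := n + 1), coinvProj_psiVal_face_zero hφ,
    sub_self, coinvProj_map_dMmer_zero_psiVal hφ, coinvProj_map_init_psiVal]
  simp only [map_dMmer_succ_psiVal hφ, map_sub, smul_zero, add_zero]

end Psi

/-- If `f : C^{gp}_n(M;ℤ)_G → A` is a group `n`-cocycle (`f ∘ ∂^{gp}_{n+1} = 0`,
the boundary of the coinvariant complex being expressed through representatives), then
`Φ_f = f ∘ ψ_n ∘ γ_n : C^{BR}_n(X;ℤ) → A` is a birack `n`-cocycle: `Φ_f ∘ ∂^{BR}_{n+1} = 0`.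
(Here the Lean parameter `n` corresponds to the paper's degree `n+1 ≥ 1`.) -/
theorem birack_cocycle_of_group_cocycle (hφ : ∀ g : G, φ g ∈ Subgroup.center G) :
    ∀ (n : ℕ) (f : CgpG (G := G) (M := M) (n + 1) →+ A),
      f.comp ((QuotientAddGroup.mk' (coinvSub (G := G) (M := M) (n + 1))).comp
          (dgp (M := M) (n + 1))) = 0 →
      ((f.comp (psiG φ n)).comp (gammaMap (n + 1))).comp (dBR φ (n + 1)) = 0 := by
  intro n f hf
  calc ((f.comp (psiG φ n)).comp (gammaMap (n + 1))).comp (dBR φ (n + 1))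
      = (f.comp (psiG φ n)).comp ((gammaMap (n + 1)).comp (dBR φ (n + 1))) := rfl
    _ = (f.comp ((psiG φ n).comp (dBRU φ (n + 1)))).comp (gammaMap (n + 2)) := by
        rw [gammaMap_comp_dBR]; rfl
    _ = ((f.comp ((coinvProj G (n + 1)).comp (dgp (n + 1)))).comp (psiFree φ (n + 1))).comp
          (gammaMap (n + 2)) := by rw [psiG_comp_dBRU hφ]; rfl
    _ = 0 := by rw [hf, AddMonoidHom.zero_comp, AddMonoidHom.zero_comp]

end GAlex
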